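/- Let p be an odd prime and let L be a finite ℤ_p-Lie algebra (a Lie ring whose underlying additive group is a finite abelian p-group) of nilpotency class at most two. Then there exists a finite ℤ_p-Lie algebra L̃ of nilpotency class at most two which is powerful and p-central, such that pL is isomorphic as a Lie algebra to L̃/Ω_1(L̃). -/

import Mathlib

/-!
Multiplying the bracket of `L` by `p` gives a Lie ring `L̃` on the same additive group. Its brackets
are multiples of `p`, and they vanish as soon as one argument is killed by `p`. Since
`p • (p • ⁅x, y⁆) = ⁅p • x, p • y⁆`, multiplication by `p` is a homomorphism `L̃ → L`; its image is
`pL` and its kernel is `Ω₁(L̃)`.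
-/

set_option autoImplicit false

namespace Paper

/-- The `R`-module `L` with its Lie bracket multiplied by `r`: the algebra `L̃` of the paper when
`r = p`. It is a type synonym of `L`, so that both brackets can be used side by side. -/
def BracketScaled {R : Type*} (_r : R) (L : Type*) : Type _ := L

namespace BracketScaled

variable {R : Type*} [CommRing R] {r : R} {L : Type*} [LieRing L] [LieAlgebra R L]

instance : AddCommGroup (BracketScaled r L) := inferInstanceAs (AddCommGroup L)

instance : Module R (BracketScaled r L) := inferInstanceAs (Module R L)

variable (r L) in
/-- The identity map of the underlying module, from `L` with the scaled bracket to `L` with its own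
bracket. -/
def unscale : BracketScaled r L ≃ₗ[R] L := LinearEquiv.refl R L

instance : Bracket (BracketScaled r L) (BracketScaled r L) where
  bracket x y := (unscale r L).symm (r • ⁅unscale r L x, unscale r L y⁆)

theorem unscale_lie (x y : BracketScaled r L) :
    unscale r L ⁅x, y⁆ = r • ⁅unscale r L x, unscale r L y⁆ :=
  (unscale r L).apply_symm_apply _

instance : LieRing (BracketScaled r L) where
  add_lie x y z := (unscale r L).injective (by simp only [unscale_lie, map_add, add_lie, smul_add])
  lie_add x y z := (unscale r L).injective (by simp only [unscale_lie, map_add, lie_add, smul_add])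
  lie_self x := (unscale r L).injective (by simp only [unscale_lie, lie_self, smul_zero, map_zero])
  leibniz_lie x y z := (unscale r L).injective (by
    simp only [unscale_lie, map_add, lie_smul, smul_lie, ← smul_add]
    rw [leibniz_lie])

instance : LieAlgebra R (BracketScaled r L) where
  lie_smul t x y := (unscale r L).injective (by
    simp only [unscale_lie, map_smul, lie_smul, smul_comm r t])

theorem exists_lie_eq_smul (x y : BracketScaled r L) :
    ∃ z : BracketScaled r L, ⁅x, y⁆ = r • z :=
  ⟨(unscale r L).symm ⁅unscale r L x, unscale r L y⁆, (map_smul (unscale r L).symm r _).symm⟩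

theorem lie_eq_zero_of_smul_eq_zero {x : BracketScaled r L} (hx : r • x = 0)
    (y : BracketScaled r L) : ⁅x, y⁆ = 0 := by
  apply (unscale r L).injective
  rw [unscale_lie, ← smul_lie, ← map_smul, hx, map_zero, zero_lie]

variable (r L) in
/-- Multiplication by `r`, as a Lie algebra homomorphism to `L` with its own bracket. -/
def smulHom : BracketScaled r L →ₗ⁅R⁆ L where
  toLinearMap := r • (unscale r L : BracketScaled r L →ₗ[R] L)
  map_lie' {x y} := by
    change r • unscale r L ⁅x, y⁆ = ⁅r • unscale r L x, r • unscale r L y⁆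
    rw [unscale_lie, smul_lie, lie_smul]

theorem smulHom_apply (x : BracketScaled r L) : smulHom r L x = r • unscale r L x := rfl

theorem range_smulHom : Set.range (smulHom r L) = {a : L | ∃ b : L, a = r • b} := by
  ext a
  simp only [Set.mem_range, Set.mem_ofPred_eq, smulHom_apply, (unscale r L).surjective.exists,
    eq_comm]

theorem smulHom_eq_zero_iff (x : BracketScaled r L) : smulHom r L x = 0 ↔ r • x = 0 := by
  rw [smulHom_apply, ← map_smul, LinearEquiv.map_eq_zero_iff]

end BracketScaled

universe u

theorem statement6_general {R : Type*} [CommRing R] (r : R)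
    (L : Type u) [LieRing L] [LieAlgebra R L] :
    ∃ (Lt : Type u) (_ : LieRing Lt) (_ : LieAlgebra R Lt),
      -- finiteness, `p`-power torsion and the nilpotency class pass from `L` to `Lt` along `e`
      (∃ e : Lt ≃ₗ[R] L, ∀ x y : Lt, e ⁅x, y⁆ = r • ⁅e x, e y⁆) ∧
      (∀ x y : Lt, ∃ z : Lt, ⁅x, y⁆ = r • z) ∧
      (∀ x : Lt, r • x = 0 → ∀ y : Lt, ⁅x, y⁆ = 0) ∧
      ∃ f : Lt →ₗ⁅R⁆ L,
        (Set.range f = {a : L | ∃ b : L, a = r • b}) ∧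
        (∀ x : Lt, f x = 0 ↔ r • x = 0) :=
  ⟨BracketScaled r L, inferInstance, inferInstance,
    ⟨BracketScaled.unscale r L, BracketScaled.unscale_lie⟩,
    BracketScaled.exists_lie_eq_smul,
    fun _ hx => BracketScaled.lie_eq_zero_of_smul_eq_zero hx,
    BracketScaled.smulHom r L, BracketScaled.range_smulHom, BracketScaled.smulHom_eq_zero_iff⟩

theorem statement6 (p : ℕ) (hp : p.Prime) (hodd : Odd p)
    (L : Type) [LieRing L] [Finite L]
    -- the underlying additive group of `L` is a finite abelian `p`-group
    (hpL : IsPGroup p (Multiplicative L))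
    -- `L` has nilpotency class at most two
    (hclass : ∀ x y z : L, ⁅⁅x, y⁆, z⁆ = 0) :
    ∃ (Lt : Type) (_ : LieRing Lt), Finite Lt ∧ IsPGroup p (Multiplicative Lt) ∧
      -- `L̃` has nilpotency class at most two
      (∀ x y z : Lt, ⁅⁅x, y⁆, z⁆ = 0) ∧
      -- `L̃` is powerful: `[L̃, L̃] ⊆ pL̃`
      (∀ x y : Lt, ∃ z : Lt, ⁅x, y⁆ = p • z) ∧
      -- `L̃` is `p`-central: `Ω_1(L̃) ⊆ Z(L̃)`
      (∀ x : Lt, p • x = 0 → ∀ y : Lt, ⁅x, y⁆ = 0) ∧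
      -- `pL ≅ L̃/Ω_1(L̃)` as Lie rings: there is a bracket-preserving additive
      -- surjection of `L̃` onto `pL` whose kernel is exactly `Ω_1(L̃)`
      ∃ f : Lt →+ L,
        (∀ x y : Lt, f ⁅x, y⁆ = ⁅f x, f y⁆) ∧
        (Set.range f = {a : L | ∃ b : L, a = p • b}) ∧
        (∀ x : Lt, f x = 0 ↔ p • x = 0) := by
  obtain ⟨Lt, _, _, ⟨e, he⟩, hpowerful, hcentral, f, hrange, hker⟩ := statement6_general (p : ℤ) L
  simp only [Nat.cast_smul_eq_nsmul] at he hpowerful hcentral hrange hker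
  exact ⟨Lt, inferInstance, .of_equiv L e.symm.toEquiv,
    hpL.of_equiv (AddEquiv.toMultiplicative (AddEquivClass.toAddEquiv e.symm)),
    fun x y z => e.injective (by simp only [he, nsmul_lie, hclass, smul_zero, map_zero]),
    hpowerful, hcentral, f.toLinearMap.toAddMonoidHom, f.map_lie, hrange, hker⟩

end Paper
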